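/- Suppose 0 < α < (d−1)/2. Then β(α, H_m^{d−1}) = α in the following sense: (i) for every β with 0 < β < α there exists a constant C_β such that for every μ ∈ M_d and every R > 1, ∫_{B^{d−1}(0,1)} |μ̂(R(ξ, ⟨Mξ,ξ⟩))|² √(1+4|ξ|²) dξ ≤ C_β R^{−β} I_α(μ); and (ii) for every β > α and every C > 0 there exist μ ∈ M_d with 0 < I_α(μ) < ∞ and R > 1 such that ∫_{B^{d−1}(0,1)} |μ̂(R(ξ, ⟨Mξ,ξ⟩))|² √(1+4|ξ|²) dξ > C R^{−β} I_α(μ). -/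

import Mathlib

open MeasureTheory Metric
open scoped ENNReal NNReal

noncomputable section

/-- The quadratic form `⟨Mξ, ξ⟩` on `ℝ^{d-1}`, where the diagonal matrix `M` has its first
`d-1-m` diagonal entries equal to `+1` and its last `m` diagonal entries equal to `-1`. -/
def hypQ (d m : ℕ) (ξ : EuclideanSpace ℝ (Fin (d - 1))) : ℝ :=
  ∑ i : Fin (d - 1), (if (i : ℕ) < d - 1 - m then (1 : ℝ) else -1) * ξ i ^ 2

/-- The point `(ξ, ⟨Mξ, ξ⟩) ∈ ℝ^d` on the hyperbolic paraboloid. -/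
def hypLift (d m : ℕ) (ξ : EuclideanSpace ℝ (Fin (d - 1))) : EuclideanSpace ℝ (Fin d) :=
  (EuclideanSpace.equiv (Fin d) ℝ).symm
    (fun i => if h : (i : ℕ) < d - 1 then ξ ⟨i, h⟩ else hypQ d m ξ)

/-- The Fourier transform `μ̂(ζ) = ∫ e^{-i x·ζ} dμ(x)` of a measure on `ℝ^d`. -/
def ftM {d : ℕ} (μ : Measure (EuclideanSpace ℝ (Fin d))) (ζ : EuclideanSpace ℝ (Fin d)) : ℂ :=
  ∫ x, Complex.exp (-(Complex.I * (((∑ i, x i * ζ i) : ℝ) : ℂ))) ∂μ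

/-- The `α`-dimensional energy `I_α(μ) = ∬ |x-y|^{-α} dμ(x) dμ(y)`. -/
def energy {d : ℕ} (α : ℝ) (μ : Measure (EuclideanSpace ℝ (Fin d))) : ℝ≥0∞ :=
  ∫⁻ x, ∫⁻ y, ENNReal.ofReal (dist x y) ^ (-α) ∂μ ∂μ

/-- The hyperbolic average `∫_{B^{d-1}(0,1)} |μ̂(R(ξ,⟨Mξ,ξ⟩))|² √(1+4|ξ|²) dξ`. -/
def hypAvg (d m : ℕ) (μ : Measure (EuclideanSpace ℝ (Fin d))) (R : ℝ) : ℝ :=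
  ∫ ξ in ball (0 : EuclideanSpace ℝ (Fin (d - 1))) 1,
    ‖ftM μ (R • hypLift d m ξ)‖ ^ 2 * Real.sqrt (1 + 4 * ‖ξ‖ ^ 2)

/-- The decay estimate `∫_H |μ̂(Rξ)|² dσ(ξ) ≤ C R^{-β} I_α(μ)` holds with some constant `C`
uniformly over measures in `M_d` and all `R > 1`. -/
def decayBound (d m : ℕ) (α β : ℝ) : Prop :=
  ∃ C : ℝ, 0 < C ∧ ∀ μ : Measure (EuclideanSpace ℝ (Fin d)), IsFiniteMeasure μ →
    μ ((closedBall 0 1)ᶜ) = 0 → ∀ R : ℝ, 1 < R →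
    ENNReal.ofReal (hypAvg d m μ R) ≤ ENNReal.ofReal (C * R ^ (-β)) * energy α μ

/-- The decay estimate with exponent `β` fails for every constant `C > 0`: there is a measure
in `M_d` with finite positive `α`-energy and an `R > 1` violating the estimate. -/
def decayFails (d m : ℕ) (α β : ℝ) : Prop :=
  ∀ C : ℝ, 0 < C → ∃ μ : Measure (EuclideanSpace ℝ (Fin d)), IsFiniteMeasure μ ∧
    μ ((closedBall 0 1)ᶜ) = 0 ∧ 0 < energy α μ ∧ energy α μ ≠ ⊤ ∧
    ∃ R : ℝ, 1 < R ∧ C * R ^ (-β) * (energy α μ).toReal < hypAvg d m μ R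

/-!
Since `|μ̂|²` is the Fourier transform of `μ ∗ μ̃`, with `μ̃` the reflection of `μ`, duality gives
`∫ |μ̂|² dν ≤ ∬ |ν̂(x - y)| dμ(x) dμ(y)` for every finite measure `ν`, so a bound
`|ν̂(w)| ≤ C |w|^{-α}` controls the left-hand side by `C I_α(μ)`. Take for `ν` the image of
`e^{-|ξ|²} dξ` on the whole paraboloid, which dominates `σ` up to a constant. As `M` is diagonal,
`ν̂(w)` is a product of one-dimensional complex Gaussian integrals; all diagonal entries being
`±1`, it is `O((1 + w_d²)^{-(d-1)/4})`, and it is exponentially small once `w₁² + ⋯ + w_{d-1}²` is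
large compared with `1 + w_d²`. Hence `|ν̂(w)| ≤ C |w|^{-α}` for `α ≤ (d-1)/2`. This is the case
`R = 1`; dilating `μ` by `R` multiplies `I_α` by `R^{-α}`, which gives general `R`.

For sharpness, shrink the restriction of Lebesgue measure to the unit ball by a factor `R`: its
energy is multiplied by `R^α`, while its average at scale `R` is the average of the original
measure at scale `1`, a fixed positive number.
-/

open scoped RealInnerProductSpace

section FourierDuality

variable {E : Type*} [NormedAddCommGroup E] [InnerProductSpace ℝ E] [MeasurableSpace E]
  [BorelSpace E] [SecondCountableTopology E]

lemma integral_charFun_comm (κ ν : Measure E) [IsFiniteMeasure κ] [IsFiniteMeasure ν] :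
    ∫ ζ, charFun κ ζ ∂ν = ∫ x, charFun ν x ∂κ := by
  simp only [charFun_apply]
  have hint : Integrable (Function.uncurry fun ζ x : E => Complex.exp (⟪x, ζ⟫ * Complex.I))
      (ν.prod κ) := by
    refine (integrable_const (1 : ℝ)).mono' (by fun_prop) (ae_of_all _ fun p => ?_)
    exact (Complex.norm_exp_ofReal_mul_I _).le
  rw [integral_integral_swap hint]
  simp only [real_inner_comm]

lemma charFun_conv_map_neg (μ : Measure E) [IsFiniteMeasure μ] (ζ : E) :
    charFun (μ ∗ μ.map (-·)) ζ = ((‖charFun μ ζ‖ ^ 2 : ℝ) : ℂ) := by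
  have hneg : charFun (μ.map (-·)) ζ = charFun μ (-ζ) := by
    simpa using charFun_map_smul (μ := μ) (-1) ζ
  rw [charFun_conv, hneg, charFun_neg, Complex.mul_conj']
  norm_cast

lemma lintegral_enorm_charFun_sq_le (μ ν : Measure E) [IsFiniteMeasure μ] [IsFiniteMeasure ν] :
    ∫⁻ ζ, ‖charFun μ ζ‖ₑ ^ 2 ∂ν ≤ ∫⁻ x, ∫⁻ y, ‖charFun ν (x - y)‖ₑ ∂μ ∂μ := by
  have hint : Integrable (fun ζ => ‖charFun μ ζ‖ ^ 2) ν := by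
    refine Integrable.of_bound (by fun_prop) (μ.real Set.univ ^ 2) (ae_of_all _ fun ζ => ?_)
    rw [Real.norm_of_nonneg (by positivity)]
    gcongr
    exact norm_charFun_le ζ
  calc ∫⁻ ζ, ‖charFun μ ζ‖ₑ ^ 2 ∂ν
      = ∫⁻ ζ, ENNReal.ofReal (‖charFun μ ζ‖ ^ 2) ∂ν := by
        simp only [← ofReal_norm, ENNReal.ofReal_pow (norm_nonneg _)]
    _ = ENNReal.ofReal (∫ ζ, ‖charFun μ ζ‖ ^ 2 ∂ν) :=
        (ofReal_integral_eq_lintegral_ofReal hint (ae_of_all _ fun ζ => by positivity)).symm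
    _ = ‖∫ ζ, charFun (μ ∗ μ.map (-·)) ζ ∂ν‖ₑ := by
        simp only [charFun_conv_map_neg]
        rw [integral_complex_ofReal, ← ofReal_norm, Complex.norm_of_nonneg (by positivity)]
    _ = ‖∫ z, charFun ν z ∂(μ ∗ μ.map (-·))‖ₑ := by rw [integral_charFun_comm]
    _ ≤ ∫⁻ z, ‖charFun ν z‖ₑ ∂(μ ∗ μ.map (-·)) := enorm_integral_le_lintegral_enorm _
    _ = ∫⁻ x, ∫⁻ y, ‖charFun ν (x - y)‖ₑ ∂μ ∂μ := by
        rw [Measure.lintegral_conv (by fun_prop)]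
        refine lintegral_congr fun x => ?_
        rw [lintegral_map (by fun_prop) (by fun_prop)]
        simp only [sub_eq_add_neg]

end FourierDuality

lemma map_smul_compl_closedBall_eq_zero {E : Type*} [NormedAddCommGroup E] [NormedSpace ℝ E]
    [MeasurableSpace E] [BorelSpace E] {μ : Measure E} {ρ r : ℝ}
    (hμ : μ (closedBall 0 ρ)ᶜ = 0) (hr : |r| ≤ 1) :
    μ.map (r • ·) (closedBall 0 ρ)ᶜ = 0 := by
  rw [Measure.map_apply (by fun_prop) measurableSet_closedBall.compl]
  refine measure_mono_null (Set.compl_subset_compl.2 fun x hx => ?_) hμ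
  have hrx : ‖r • x‖ ≤ ‖x‖ := by
    rw [norm_smul]
    exact mul_le_of_le_one_left (norm_nonneg x) hr
  exact mem_closedBall_zero_iff.2 (hrx.trans (mem_closedBall_zero_iff.1 hx))

section Energy

variable {d : ℕ} {α : ℝ}

lemma energy_map_smul (μ : Measure (EuclideanSpace ℝ (Fin d))) {r : ℝ} (hr : 0 < r) :
    energy α (μ.map (r • ·)) = ENNReal.ofReal (r ^ (-α)) * energy α μ := by
  have hemb : MeasurableEmbedding fun x : EuclideanSpace ℝ (Fin d) => r • x :=
    (Homeomorph.smulOfNeZero r hr.ne').measurableEmbedding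
  have hker (x y : EuclideanSpace ℝ (Fin d)) : ENNReal.ofReal (dist (r • x) (r • y)) ^ (-α) =
      ENNReal.ofReal (r ^ (-α)) * ENNReal.ofReal (dist x y) ^ (-α) := by
    rw [dist_smul₀, Real.norm_of_nonneg hr.le, ENNReal.ofReal_mul hr.le,
      ENNReal.mul_rpow_of_ne_top ENNReal.ofReal_ne_top ENNReal.ofReal_ne_top,
      ENNReal.ofReal_rpow_of_pos hr]
  simp only [energy, hemb.lintegral_map, hker, lintegral_const_mul' _ _ ENNReal.ofReal_ne_top]

lemma energy_pos (hα : 0 ≤ α) {μ : Measure (EuclideanSpace ℝ (Fin d))} [SFinite μ] (hμ : μ ≠ 0) :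
    0 < energy α μ := by
  have hμ' : 0 < μ Set.univ := Measure.measure_univ_pos.2 hμ
  have hker (x y : EuclideanSpace ℝ (Fin d)) : ENNReal.ofReal (dist x y) ^ (-α) ≠ 0 := by
    rw [ENNReal.rpow_neg, ENNReal.inv_ne_zero]
    exact ENNReal.rpow_ne_top_of_nonneg hα ENNReal.ofReal_ne_top
  have hinner (x : EuclideanSpace ℝ (Fin d)) :
      ∫⁻ y, ENNReal.ofReal (dist x y) ^ (-α) ∂μ ≠ 0 := by
    refine ((lintegral_pos_iff_support (by fun_prop)).2 ?_).ne'
    rwa [Function.support_eq_univ (hker x)]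
  have hmeas : Measurable fun x => ∫⁻ y, ENNReal.ofReal (dist x y) ^ (-α) ∂μ :=
    Measurable.lintegral_prod_right (by fun_prop)
  rwa [energy, lintegral_pos_iff_support hmeas, Function.support_eq_univ hinner]

lemma setLIntegral_ball_norm_rpow_neg_lt_top (hα0 : 0 ≤ α) (hαd : α < d) (ρ : ℝ) :
    ∫⁻ x in ball (0 : EuclideanSpace ℝ (Fin d)) ρ, ENNReal.ofReal ‖x‖ ^ (-α) < ⊤ := by
  have hd : 1 ≤ Module.finrank ℝ (EuclideanSpace ℝ (Fin d)) := by
    rw [finrank_euclideanSpace_fin]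
    exact_mod_cast hα0.trans_lt hαd
  have : Nontrivial (EuclideanSpace ℝ (Fin d)) := Module.nontrivial_of_finrank_pos hd
  have hint : IntegrableOn (fun x : EuclideanSpace ℝ (Fin d) => ‖x‖ ^ (-α)) (ball 0 ρ) := by
    refine integrableOn_ball_of_norm_le_rpow (C := 1) hd (by simpa using hαd)
      (ae_of_all _ fun x => ?_) (Measurable.aestronglyMeasurable (by fun_prop))
    rw [Real.norm_of_nonneg (by positivity), one_mul]
  refine lt_of_eq_of_lt (lintegral_congr_ae ?_) hint.lintegral_lt_top
  filter_upwards [ae_restrict_of_ae (Measure.ae_ne volume 0)] with x hx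
  exact ENNReal.ofReal_rpow_of_pos (norm_pos_iff.2 hx)

lemma energy_restrict_ne_top (hα0 : 0 ≤ α) (hαd : α < d) {s : Set (EuclideanSpace ℝ (Fin d))}
    (hs : volume s ≠ ⊤) : energy α (volume.restrict s) ≠ ⊤ := by
  set A := ∫⁻ z in ball (0 : EuclideanSpace ℝ (Fin d)) 1, ENNReal.ofReal ‖z‖ ^ (-α)
  have hA : A < ⊤ := setLIntegral_ball_norm_rpow_neg_lt_top hα0 hαd 1
  have hker (x y : EuclideanSpace ℝ (Fin d)) : ENNReal.ofReal (dist x y) ^ (-α) ≤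
      (ball 0 1).indicator (fun z => ENNReal.ofReal ‖z‖ ^ (-α)) (x - y) + 1 := by
    rw [dist_eq_norm]
    by_cases hxy : ‖x - y‖ < 1
    · rw [Set.indicator_of_mem (mem_ball_zero_iff.2 hxy)]
      exact le_self_add
    · refine le_add_of_nonneg_of_le zero_le ?_
      rw [ENNReal.rpow_neg, ENNReal.inv_le_one]
      simpa using ENNReal.rpow_le_rpow (ENNReal.one_le_ofReal.2 (not_lt.1 hxy)) hα0
  have hinner (x : EuclideanSpace ℝ (Fin d)) :
      ∫⁻ y in s, ENNReal.ofReal (dist x y) ^ (-α) ≤ A + volume s := by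
    calc ∫⁻ y in s, ENNReal.ofReal (dist x y) ^ (-α)
        ≤ ∫⁻ y in s, (ball 0 1).indicator (fun z => ENNReal.ofReal ‖z‖ ^ (-α)) (x - y) + 1 :=
          lintegral_mono (hker x)
      _ = (∫⁻ y in s, (ball 0 1).indicator (fun z => ENNReal.ofReal ‖z‖ ^ (-α)) (x - y)) +
          volume s := by rw [lintegral_add_right _ measurable_const, setLIntegral_one]
      _ ≤ (∫⁻ y, (ball 0 1).indicator (fun z => ENNReal.ofReal ‖z‖ ^ (-α)) (x - y)) +
          volume s := add_le_add_left (setLIntegral_le_lintegral _ _) _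
      _ = A + volume s := by
          rw [lintegral_sub_left_eq_self, lintegral_indicator measurableSet_ball]
  refine ne_top_of_le_ne_top ?_ (lintegral_mono hinner)
  rw [lintegral_const, Measure.restrict_apply_univ]
  exact ENNReal.mul_ne_top (ENNReal.add_ne_top.2 ⟨hA.ne, hs⟩) hs

lemma lintegral_enorm_charFun_sq_le_energy (μ : Measure (EuclideanSpace ℝ (Fin d)))
    [IsFiniteMeasure μ] {ν : Measure (EuclideanSpace ℝ (Fin d))} [IsFiniteMeasure ν] {C : ℝ≥0∞}
    (hC : C ≠ ⊤) (hν : ∀ w, ‖charFun ν w‖ₑ ≤ C * ENNReal.ofReal ‖w‖ ^ (-α)) :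
    ∫⁻ ζ, ‖charFun μ ζ‖ₑ ^ 2 ∂ν ≤ C * energy α μ := by
  calc ∫⁻ ζ, ‖charFun μ ζ‖ₑ ^ 2 ∂ν
      ≤ ∫⁻ x, ∫⁻ y, ‖charFun ν (x - y)‖ₑ ∂μ ∂μ := lintegral_enorm_charFun_sq_le μ ν
    _ ≤ ∫⁻ x, ∫⁻ y, C * ENNReal.ofReal ‖x - y‖ ^ (-α) ∂μ ∂μ := by gcongr; exact hν _
    _ = C * energy α μ := by
        simp only [energy, dist_eq_norm, lintegral_const_mul' _ _ hC]

end Energy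

section HyperbolicAverage

variable {d : ℕ} (m : ℕ)

lemma norm_ftM (μ : Measure (EuclideanSpace ℝ (Fin d))) (ζ : EuclideanSpace ℝ (Fin d)) :
    ‖ftM μ ζ‖ = ‖charFun μ ζ‖ := by
  have hft : ftM μ ζ = charFun μ (-ζ) := by
    simp only [ftM, charFun_apply, PiLp.inner_apply, PiLp.neg_apply, RCLike.inner_apply,
      conj_trivial, neg_mul, Finset.sum_neg_distrib, Complex.ofReal_neg, mul_comm, mul_neg]
  rw [hft, charFun_neg, RCLike.norm_conj]

lemma hypAvg_map_smul (μ : Measure (EuclideanSpace ℝ (Fin d))) (r R : ℝ) :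
    hypAvg d m (μ.map (r • ·)) R = hypAvg d m μ (r * R) := by
  simp only [hypAvg, norm_ftM, charFun_map_smul, mul_smul]

variable (d)

lemma hypLift_zero : hypLift d m 0 = 0 := by
  ext i
  simp [hypLift, hypQ]

lemma continuous_hypLift : Continuous (hypLift d m) := by
  refine (EuclideanSpace.equiv (Fin d) ℝ).symm.continuous.comp (continuous_pi fun i => ?_)
  by_cases hi : (i : ℕ) < d - 1
  · simp only [hi, dite_true]
    fun_prop
  · simp only [hi, dite_false, hypQ]
    fun_prop

variable {d}

lemma hypAvg_pos {μ : Measure (EuclideanSpace ℝ (Fin d))} [IsFiniteMeasure μ] (hμ : μ ≠ 0)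
    (R : ℝ) : 0 < hypAvg d m μ R := by
  set f : EuclideanSpace ℝ (Fin (d - 1)) → ℝ := fun ξ =>
    ‖ftM μ (R • hypLift d m ξ)‖ ^ 2 * √(1 + 4 * ‖ξ‖ ^ 2) with hf
  have hcont : Continuous f := by
    have := continuous_hypLift d m
    simp only [hf, norm_ftM]
    fun_prop
  have hint : IntegrableOn f (ball 0 1) :=
    (hcont.continuousOn.integrableOn_compact (isCompact_closedBall 0 1)).mono_set
      ball_subset_closedBall
  have hf0 : f 0 ≠ 0 := by
    have : NeZero μ := ⟨hμ⟩
    have hmass : μ.real Set.univ ≠ 0 := measureReal_univ_ne_zero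
    simpa [hf, norm_ftM, hypLift_zero, charFun_zero] using hmass
  change 0 < ∫ ξ in ball 0 1, f ξ
  rw [setIntegral_pos_iff_support_of_nonneg_ae (ae_of_all _ fun ξ => by positivity) hint]
  exact (hcont.isOpen_support.inter isOpen_ball).measure_pos _ ⟨0, hf0, mem_ball_self one_pos⟩

end HyperbolicAverage

section GaussianParaboloid

variable (d m : ℕ)

/-- The whole paraboloid, weighted by a Gaussian in the parameter `ξ`: the image of
`e^{-|ξ|²} dξ` under `ξ ↦ (ξ, ⟨Mξ, ξ⟩)`. Up to the factor `3e` it dominates the surface measure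
`σ` of `H`, and its Fourier transform is explicit. -/
def gaussHyp : Measure (EuclideanSpace ℝ (Fin d)) :=
  (volume.withDensity fun ξ => ENNReal.ofReal (Real.exp (-‖ξ‖ ^ 2))).map (hypLift d m)

/-- The `i`-th diagonal entry of the matrix `M`. -/
def hypSign (i : Fin (d - 1)) : ℝ :=
  if (i : ℕ) < d - 1 - m then 1 else -1

instance isFiniteMeasure_gaussHyp : IsFiniteMeasure (gaussHyp d m) := by
  have hgauss : Integrable fun ξ : EuclideanSpace ℝ (Fin (d - 1)) => Real.exp (-‖ξ‖ ^ 2) := by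
    have h := (GaussianFourier.integrable_cexp_neg_mul_sq_norm_add
      (V := EuclideanSpace ℝ (Fin (d - 1))) (b := 1) (by simp) 0 0).norm
    simpa [Complex.norm_exp, ← Complex.ofReal_pow] using h
  have := isFiniteMeasure_withDensity_ofReal hgauss.2
  exact Measure.isFiniteMeasure_map _ _

lemma lintegral_gaussHyp {f : EuclideanSpace ℝ (Fin d) → ℝ≥0∞} (hf : Measurable f) :
    ∫⁻ ζ, f ζ ∂gaussHyp d m = ∫⁻ ξ, ENNReal.ofReal (Real.exp (-‖ξ‖ ^ 2)) * f (hypLift d m ξ) := by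
  have hL := (continuous_hypLift d m).measurable
  rw [gaussHyp, lintegral_map hf hL]
  exact lintegral_withDensity_eq_lintegral_mul _ (by fun_prop) (hf.comp hL)

lemma integral_gaussHyp {f : EuclideanSpace ℝ (Fin d) → ℂ} (hf : Continuous f) :
    ∫ ζ, f ζ ∂gaussHyp d m = ∫ ξ, (Real.exp (-‖ξ‖ ^ 2) : ℂ) * f (hypLift d m ξ) := by
  rw [gaussHyp, integral_map (continuous_hypLift d m).aemeasurable hf.aestronglyMeasurable,
    integral_withDensity_eq_integral_toReal_smul (by fun_prop) (by simp)]
  simp only [ENNReal.toReal_ofReal (Real.exp_pos _).le, Complex.real_smul]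

lemma ofReal_hypAvg_le_lintegral_gaussHyp (μ : Measure (EuclideanSpace ℝ (Fin d)))
    [IsFiniteMeasure μ] (R : ℝ) :
    ENNReal.ofReal (hypAvg d m μ R) ≤
      ENNReal.ofReal (3 * Real.exp 1) * ∫⁻ ζ, ‖charFun μ (R • ζ)‖ₑ ^ 2 ∂gaussHyp d m := by
  have hweight (ξ : EuclideanSpace ℝ (Fin (d - 1))) (hξ : ξ ∈ ball 0 1) :
      √(1 + 4 * ‖ξ‖ ^ 2) ≤ 3 * Real.exp 1 * Real.exp (-‖ξ‖ ^ 2) := by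
    have hξ1 : ‖ξ‖ ^ 2 ≤ 1 := pow_le_one₀ (norm_nonneg ξ) (mem_ball_zero_iff.1 hξ).le
    have hsqrt : √(1 + 4 * ‖ξ‖ ^ 2) ≤ 3 := by
      rw [Real.sqrt_le_left (by norm_num)]
      linarith
    have hexp : 1 ≤ Real.exp 1 * Real.exp (-‖ξ‖ ^ 2) := by
      rw [← Real.exp_add]
      exact Real.one_le_exp (by linarith)
    linarith
  rw [lintegral_gaussHyp d m (by fun_prop), ← lintegral_const_mul' _ _ ENNReal.ofReal_ne_top]
  refine (Real.ofReal_le_enorm _).trans <| (enorm_integral_le_lintegral_enorm _).trans <|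
    (setLIntegral_mono' measurableSet_ball fun ξ hξ => ?_).trans (setLIntegral_le_lintegral _ _)
  calc ‖‖ftM μ (R • hypLift d m ξ)‖ ^ 2 * √(1 + 4 * ‖ξ‖ ^ 2)‖ₑ
      = ENNReal.ofReal (√(1 + 4 * ‖ξ‖ ^ 2)) * ‖charFun μ (R • hypLift d m ξ)‖ₑ ^ 2 := by
        rw [Real.enorm_of_nonneg (by positivity), norm_ftM, mul_comm,
          ENNReal.ofReal_mul (by positivity), ENNReal.ofReal_pow (norm_nonneg _), ofReal_norm]
    _ ≤ ENNReal.ofReal (3 * Real.exp 1 * Real.exp (-‖ξ‖ ^ 2)) *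
        ‖charFun μ (R • hypLift d m ξ)‖ₑ ^ 2 := by gcongr; exact hweight ξ hξ
    _ = _ := by rw [ENNReal.ofReal_mul (by positivity), mul_assoc]

end GaussianParaboloid

section FourierDecay

lemma inner_hypLift (n m : ℕ) (ξ : EuclideanSpace ℝ (Fin n)) (w : EuclideanSpace ℝ (Fin (n + 1))) :
    ⟪hypLift (n + 1) m ξ, w⟫ =
      ∑ i, w i.castSucc * ξ i + w (Fin.last n) * ∑ i, hypSign (n + 1) m i * ξ i ^ 2 := by
  rw [PiLp.inner_apply, Fin.sum_univ_castSucc]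
  simp [hypLift, hypQ, hypSign]

lemma norm_cpow_half_mul_cexp_sq_div (b : ℂ) (t : ℝ) :
    ‖(Real.pi / b) ^ (1 / 2 : ℂ) * Complex.exp ((Complex.I * t) ^ 2 / (4 * b))‖ =
      √(Real.pi / ‖b‖) * Real.exp (-(t ^ 2 * b.re / (4 * ‖b‖ ^ 2))) := by
  have hre : ((Complex.I * t) ^ 2 / (4 * b)).re = -(t ^ 2 * b.re / (4 * ‖b‖ ^ 2)) := by
    have hquot : (Complex.I * t) ^ 2 / (4 * b) = ((-(t ^ 2 / 4) : ℝ) : ℂ) * b⁻¹ := by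
      rw [mul_pow, Complex.I_sq]
      push_cast
      ring
    rw [hquot, Complex.re_ofReal_mul, Complex.inv_re, Complex.normSq_eq_norm_sq]
    ring
  have hhalf : (1 / 2 : ℂ) = ((1 / 2 : ℝ) : ℂ) := by norm_num
  rw [norm_mul, Complex.norm_exp, hre, hhalf, Complex.norm_cpow_real, norm_div,
    Complex.norm_of_nonneg Real.pi_pos.le, Real.sqrt_eq_rpow]

lemma norm_integral_gaussian_mul_cexp_quadratic {ι : Type*} [Fintype ι] (e t : ι → ℝ) (s : ℝ) :
    ‖∫ ξ : EuclideanSpace ℝ ι, (Real.exp (-‖ξ‖ ^ 2) : ℂ) *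
        Complex.exp ((∑ i, t i * ξ i + s * ∑ i, e i * ξ i ^ 2 : ℝ) * Complex.I)‖ =
      ∏ i, √(Real.pi / √(1 + (s * e i) ^ 2)) *
        Real.exp (-(t i ^ 2 / (4 * (1 + (s * e i) ^ 2)))) := by
  set b : ι → ℂ := fun i => 1 - Complex.I * (s * e i : ℝ)
  have hre (i : ι) : (b i).re = 1 := by simp [b]
  have hnorm (i : ι) : ‖b i‖ = √(1 + (s * e i) ^ 2) := by
    rw [Complex.norm_eq_sqrt_sq_add_sq]
    simp [b]
  have hproduct : ∫ ξ : EuclideanSpace ℝ ι, (Real.exp (-‖ξ‖ ^ 2) : ℂ) *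
        Complex.exp ((∑ i, t i * ξ i + s * ∑ i, e i * ξ i ^ 2 : ℝ) * Complex.I) =
      ∏ i, (Real.pi / b i) ^ (1 / 2 : ℂ) * Complex.exp ((Complex.I * t i) ^ 2 / (4 * b i)) := by
    rw [← GaussianFourier.integral_cexp_neg_sum_mul_add (fun i => by simp [hre]),
      ← (PiLp.volume_preserving_toLp ι).integral_comp
        (MeasurableEquiv.toLp 2 _).measurableEmbedding]
    refine integral_congr_ae (ae_of_all _ fun v => ?_)
    simp only [Complex.ofReal_exp, ← Complex.exp_add, EuclideanSpace.real_norm_sq_eq]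
    congr 1
    push_cast
    simp only [Finset.mul_sum, ← Finset.sum_neg_distrib, ← Finset.sum_add_distrib, Finset.sum_mul]
    refine Finset.sum_congr rfl fun i _ => ?_
    simp only [b]
    push_cast
    ring
  simp only [hproduct, norm_prod, norm_cpow_half_mul_cexp_sq_div, hre, mul_one, hnorm,
    Real.sq_sqrt (add_nonneg zero_le_one (sq_nonneg _))]

lemma norm_charFun_gaussHyp (n m : ℕ) (w : EuclideanSpace ℝ (Fin (n + 1))) :
    ‖charFun (gaussHyp (n + 1) m) w‖ = √(Real.pi / √(1 + w (Fin.last n) ^ 2)) ^ n *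
      Real.exp (-((∑ i : Fin n, w i.castSucc ^ 2) / (4 * (1 + w (Fin.last n) ^ 2)))) := by
  have hsign (i : Fin n) : hypSign (n + 1) m i ^ 2 = 1 := by
    unfold hypSign
    split_ifs <;> norm_num
  have hfourier := norm_integral_gaussian_mul_cexp_quadratic (hypSign (n + 1) m)
    (fun i : Fin n => w i.castSucc) (w (Fin.last n))
  rw [charFun_apply, integral_gaussHyp _ _ (by fun_prop)]
  simp only [inner_hypLift]
  refine hfourier.trans ?_
  simp only [mul_pow, hsign, mul_one, Finset.prod_mul_distrib, Finset.prod_const,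
    Finset.card_univ, Fintype.card_fin, ← Real.exp_sum, Finset.sum_neg_distrib, Finset.sum_div]
  rfl

lemma add_rpow_le_mul_exp {p D T : ℝ} (hp : 0 < p) (hD : 0 < D) (hT : 0 ≤ T) :
    (D + T) ^ p ≤ (1 + 4 * p) ^ p * D ^ p * Real.exp (T / (4 * D)) := by
  have hbase : D + T ≤ (1 + 4 * p) * D * Real.exp (T / (4 * p * D)) := by
    have hexp := Real.add_one_le_exp (T / (4 * p * D))
    calc D + T ≤ (1 + 4 * p) * D * (T / (4 * p * D) + 1) := by
          have : (1 + 4 * p) * D * (T / (4 * p * D) + 1) = D + T + (T / (4 * p) + 4 * p * D) := by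
            field_simp
            ring
          rw [this]
          exact le_add_of_nonneg_right (by positivity)
      _ ≤ _ := by gcongr
  calc (D + T) ^ p ≤ ((1 + 4 * p) * D * Real.exp (T / (4 * p * D))) ^ p := by gcongr
    _ = _ := by
      rw [Real.mul_rpow (by positivity) (by positivity), Real.mul_rpow (by positivity) hD.le,
        ← Real.exp_mul]
      congr 2
      field_simp

lemma norm_rpow_mul_norm_charFun_gaussHyp_le (n m : ℕ) {α : ℝ} (hα0 : 0 < α)
    (hα : α ≤ (n : ℝ) / 2) (w : EuclideanSpace ℝ (Fin (n + 1))) :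
    ‖w‖ ^ α * ‖charFun (gaussHyp (n + 1) m) w‖ ≤ (1 + 2 * α) ^ (α / 2) * √Real.pi ^ n := by
  set D := 1 + w (Fin.last n) ^ 2 with hD
  set T := ∑ i : Fin n, w i.castSucc ^ 2 with hT
  have hD1 : 1 ≤ D := le_add_of_nonneg_right (sq_nonneg _)
  have hD0 : 0 < D := one_pos.trans_le hD1
  have hT0 : 0 ≤ T := by positivity
  have hw : ‖w‖ ^ α ≤ (D + T) ^ (α / 2) := by
    have hsq : ‖w‖ ^ 2 ≤ D + T := by
      rw [EuclideanSpace.real_norm_sq_eq, Fin.sum_univ_castSucc, ← hT, hD]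
      linarith
    calc ‖w‖ ^ α = (‖w‖ ^ 2) ^ (α / 2) := by
          rw [← Real.rpow_natCast_mul (norm_nonneg w)]
          congr 1
          push_cast
          ring
      _ ≤ (D + T) ^ (α / 2) := by gcongr
  have hpow : D ^ (α / 2) * √(Real.pi / √D) ^ n ≤ √Real.pi ^ n := by
    have hroot : √√D ^ n = D ^ ((n : ℝ) / 4) := by
      rw [Real.sqrt_eq_rpow, Real.sqrt_eq_rpow, ← Real.rpow_mul hD0.le,
        ← Real.rpow_mul_natCast hD0.le]
      congr 1
      ring
    have hDα : D ^ (α / 2) ≤ D ^ ((n : ℝ) / 4) :=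
      Real.rpow_le_rpow_of_exponent_le hD1 (by linarith)
    rw [Real.sqrt_div Real.pi_pos.le, div_pow, hroot, mul_div_assoc',
      div_le_iff₀ (by positivity), mul_comm]
    gcongr
  calc ‖w‖ ^ α * ‖charFun (gaussHyp (n + 1) m) w‖
      ≤ ((1 + 4 * (α / 2)) ^ (α / 2) * D ^ (α / 2) * Real.exp (T / (4 * D))) *
        (√(Real.pi / √D) ^ n * Real.exp (-(T / (4 * D)))) := by
        rw [norm_charFun_gaussHyp]
        gcongr
        exact hw.trans (add_rpow_le_mul_exp (half_pos hα0) hD0 hT0)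
    _ = (1 + 4 * (α / 2)) ^ (α / 2) * (D ^ (α / 2) * √(Real.pi / √D) ^ n) *
        (Real.exp (T / (4 * D)) * Real.exp (-(T / (4 * D)))) := by ring
    _ = (1 + 2 * α) ^ (α / 2) * (D ^ (α / 2) * √(Real.pi / √D) ^ n) := by
        rw [← Real.exp_add, add_neg_cancel, Real.exp_zero, mul_one]
        ring_nf
    _ ≤ (1 + 2 * α) ^ (α / 2) * √Real.pi ^ n := by gcongr

lemma enorm_le_mul_norm_rpow_neg {E F : Type*} [NormedAddCommGroup E] [NormedAddCommGroup F]
    {α C : ℝ} (hα : 0 < α) (hC : 0 < C) {w : E} {z : F} (h : ‖w‖ ^ α * ‖z‖ ≤ C) :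
    ‖z‖ₑ ≤ ENNReal.ofReal C * ENNReal.ofReal ‖w‖ ^ (-α) := by
  rcases eq_or_ne w 0 with rfl | hw
  · rw [norm_zero, ENNReal.ofReal_zero, ENNReal.zero_rpow_of_neg (neg_neg_of_pos hα),
      ENNReal.mul_top (ENNReal.ofReal_pos.2 hC).ne']
    exact le_top
  · have hw0 : 0 < ‖w‖ := norm_pos_iff.2 hw
    rw [ENNReal.ofReal_rpow_of_pos hw0, ← ENNReal.ofReal_mul hC.le, ← ofReal_norm,
      Real.rpow_neg hw0.le, ← div_eq_mul_inv]
    exact ENNReal.ofReal_le_ofReal ((le_div_iff₀' (by positivity)).2 h)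

end FourierDecay

theorem decayBound_of_le {d m : ℕ} {α β : ℝ} (hα0 : 0 < α) (hα : α ≤ ((d : ℝ) - 1) / 2)
    (hβ : β ≤ α) : decayBound d m α β := by
  obtain ⟨n, rfl⟩ : ∃ n, d = n + 1 :=
    Nat.exists_eq_succ_of_ne_zero fun hd => by norm_num [hd] at hα; linarith
  set C := (1 + 2 * α) ^ (α / 2) * √Real.pi ^ n
  have hC : 0 < C := by positivity
  have hdecay (w : EuclideanSpace ℝ (Fin (n + 1))) :
      ‖charFun (gaussHyp (n + 1) m) w‖ₑ ≤ ENNReal.ofReal C * ENNReal.ofReal ‖w‖ ^ (-α) :=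
    enorm_le_mul_norm_rpow_neg hα0 hC
      (norm_rpow_mul_norm_charFun_gaussHyp_le n m hα0 (by simpa using hα) w)
  have hscaleOne (ν : Measure (EuclideanSpace ℝ (Fin (n + 1)))) [IsFiniteMeasure ν] :
      ENNReal.ofReal (hypAvg (n + 1) m ν 1) ≤
        ENNReal.ofReal (3 * Real.exp 1 * C) * energy α ν := by
    calc ENNReal.ofReal (hypAvg (n + 1) m ν 1)
        ≤ ENNReal.ofReal (3 * Real.exp 1) * ∫⁻ ζ, ‖charFun ν ζ‖ₑ ^ 2 ∂gaussHyp (n + 1) m := by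
          simpa only [one_smul] using ofReal_hypAvg_le_lintegral_gaussHyp (n + 1) m ν 1
      _ ≤ ENNReal.ofReal (3 * Real.exp 1) * (ENNReal.ofReal C * energy α ν) := by
          gcongr
          exact lintegral_enorm_charFun_sq_le_energy ν ENNReal.ofReal_ne_top hdecay
      _ = ENNReal.ofReal (3 * Real.exp 1 * C) * energy α ν := by
          rw [← mul_assoc, ← ENNReal.ofReal_mul (by positivity)]
  refine ⟨3 * Real.exp 1 * C, by positivity, fun μ _ _ R hR => ?_⟩
  have hR0 : 0 < R := one_pos.trans hR
  calc ENNReal.ofReal (hypAvg (n + 1) m μ R)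
      = ENNReal.ofReal (hypAvg (n + 1) m (μ.map (R • ·)) 1) := by rw [hypAvg_map_smul, mul_one]
    _ ≤ ENNReal.ofReal (3 * Real.exp 1 * C) * energy α (μ.map (R • ·)) := hscaleOne _
    _ = ENNReal.ofReal (3 * Real.exp 1 * C * R ^ (-α)) * energy α μ := by
        rw [energy_map_smul μ hR0, ← mul_assoc, ← ENNReal.ofReal_mul (by positivity)]
    _ ≤ ENNReal.ofReal (3 * Real.exp 1 * C * R ^ (-β)) * energy α μ := by
        gcongr
        exact hR.le

theorem decayFails_of_energy_ne_top {d m : ℕ} {α β : ℝ} (hα : 0 ≤ α) (hβ : α < β)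
    {μ : Measure (EuclideanSpace ℝ (Fin d))} [IsFiniteMeasure μ] (hμ : μ ≠ 0)
    (hsupp : μ (closedBall 0 1)ᶜ = 0) (henergy : energy α μ ≠ ⊤) : decayFails d m α β := by
  intro C _
  set E := (energy α μ).toReal
  have hlim : Filter.Tendsto (fun R : ℝ => C * E * R ^ (-(β - α))) Filter.atTop (nhds 0) := by
    simpa using (tendsto_rpow_neg_atTop (sub_pos.2 hβ)).const_mul (C * E)
  obtain ⟨R, hRavg, hR1⟩ := ((hlim.eventually_lt_const (hypAvg_pos m hμ 1)).and
    (Filter.eventually_gt_atTop 1)).exists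
  have hR0 : 0 < R := one_pos.trans hR1
  have hEmap : energy α (μ.map (R⁻¹ • ·)) = ENNReal.ofReal (R ^ α) * energy α μ := by
    rw [energy_map_smul μ (inv_pos.2 hR0), Real.inv_rpow hR0.le, Real.rpow_neg hR0.le, inv_inv]
  refine ⟨μ.map (R⁻¹ • ·), inferInstance, ?_, ?_, ?_, R, hR1, ?_⟩
  · refine map_smul_compl_closedBall_eq_zero hsupp ?_
    rw [abs_of_pos (inv_pos.2 hR0)]
    exact inv_le_one_of_one_le₀ hR1.le
  · rw [hEmap]
    exact ENNReal.mul_pos (ENNReal.ofReal_pos.2 (by positivity)).ne' (energy_pos hα hμ).ne'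
  · rw [hEmap]
    exact ENNReal.mul_ne_top ENNReal.ofReal_ne_top henergy
  · calc C * R ^ (-β) * (energy α (μ.map (R⁻¹ • ·))).toReal
        = C * E * R ^ (-(β - α)) := by
          rw [hEmap, ENNReal.toReal_mul, ENNReal.toReal_ofReal (by positivity),
            show -(β - α) = -β + α by ring, Real.rpow_add hR0]
          ring
      _ < hypAvg d m μ 1 := hRavg
      _ = hypAvg d m (μ.map (R⁻¹ • ·)) R := by rw [hypAvg_map_smul, inv_mul_cancel₀ hR0.ne']

theorem decayFails_of_lt {d m : ℕ} {α β : ℝ} (hα0 : 0 ≤ α) (hαd : α < d) (hβ : α < β) :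
    decayFails d m α β := by
  have hvol : volume (ball (0 : EuclideanSpace ℝ (Fin d)) 1) ≠ ⊤ := measure_ball_lt_top.ne
  have : IsFiniteMeasure (volume.restrict (ball (0 : EuclideanSpace ℝ (Fin d)) 1)) :=
    isFiniteMeasure_restrict.2 hvol
  refine decayFails_of_energy_ne_top hα0 hβ (μ := volume.restrict (ball 0 1)) ?_ ?_
    (energy_restrict_ne_top hα0 hαd hvol)
  · rw [Ne, Measure.restrict_eq_zero]
    exact (measure_ball_pos volume _ one_pos).ne'
  · rw [Measure.restrict_apply measurableSet_closedBall.compl,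
      (disjoint_compl_left.mono_right ball_subset_closedBall).inter_eq, measure_empty]

theorem statement4_general (d m : ℕ) (α : ℝ) (hα0 : 0 < α) (hα : α ≤ ((d : ℝ) - 1) / 2) :
    (∀ β : ℝ, β ≤ α → decayBound d m α β) ∧ (∀ β : ℝ, α < β → decayFails d m α β) :=
  ⟨fun _ hβ => decayBound_of_le hα0 hα hβ,
    fun _ hβ => decayFails_of_lt hα0.le (by linarith) hβ⟩

/-- if `0 < a < (d-1)/2` then `beta(a, H_m^{d-1}) = a`: the decay estimate holds
for every `0 < b < a` and fails for every `b > a`. -/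
theorem statement4 (d m : ℕ) (hd : 3 ≤ d) (hm1 : 1 ≤ m) (hm2 : 2 * m ≤ d - 1)
    (α : ℝ) (hα0 : 0 < α) (hα : α < ((d : ℝ) - 1) / 2) :
    (∀ β : ℝ, 0 < β → β < α → decayBound d m α β) ∧
    (∀ β : ℝ, α < β → decayFails d m α β) := by
  obtain ⟨hbound, hfails⟩ := statement4_general d m α hα0 hα.le
  exact ⟨fun β _ hβ => hbound β hβ.le, hfails⟩
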